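/- For every first-order theory Φ and every ground disjunctive logic program P, ι^∨_HP(Φ,P) ≡ᴱ ι^∨_EB(Φ,P), i.e., Φ ∪ τ^∨_HP(P) and Φ ∪ τ^∨_EB(P) have exactly the same stableᴱ expansions. -/

import Mathlib

set_option autoImplicit false

/-! # First-order autoepistemic logic (FO-AEL): syntax -/

structure Sig : Type 1 where
  Func : Type
  Pred : Type
  arF : Func → ℕ
  arP : Pred → ℕ

inductive Term (S : Sig) : Type
  | var : ℕ → Term S
  | func : (f : S.Func) → (Fin (S.arF f) → Term S) → Term S

inductive Formula (S : Sig) : Type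
  | atom : (p : S.Pred) → (Fin (S.arP p) → Term S) → Formula S
  | eq : Term S → Term S → Formula S
  | not : Formula S → Formula S
  | and : Formula S → Formula S → Formula S
  | ex : ℕ → Formula S → Formula S
  | box : Formula S → Formula S

namespace Term

variable {S : Sig}

/-- A term is ground if it contains no variables; ground terms are the *names*. -/
def isGround : Term S → Prop
  | var _ => False
  | func _ ts => ∀ i, (ts i).isGround

def hasVar (x : ℕ) : Term S → Prop
  | var y => y = x
  | func _ ts => ∃ i, (ts i).hasVar x

/-- Application of a partial (name) substitution to a term. -/
def subst (β : ℕ → Option (Term S)) : Term S → Term S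
  | var x => (β x).getD (var x)
  | func f ts => func f (fun i => (ts i).subst β)

/-- The function symbols occurring in a term. -/
def funcs : Term S → Set S.Func
  | var _ => ∅
  | func f ts => insert f (⋃ i, (ts i).funcs)

/-- `t` is a name (ground term) over the set `F` of function symbols. -/
def isNameOf (F : Set S.Func) : Term S → Prop
  | var _ => False
  | func f ts => f ∈ F ∧ ∀ i, (ts i).isNameOf F

end Term

namespace Formula

variable {S : Sig}

/-- A formula is objective if it is 𝖫-free. -/
def isObjective : Formula S → Prop
  | atom _ _ => True
  | eq _ _ => True
  | not φ => φ.isObjective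
  | and φ ψ => φ.isObjective ∧ ψ.isObjective
  | ex _ φ => φ.isObjective
  | box _ => False

def isGround : Formula S → Prop
  | atom _ ts => ∀ i, (ts i).isGround
  | eq t₁ t₂ => t₁.isGround ∧ t₂.isGround
  | not φ => φ.isGround
  | and φ ψ => φ.isGround ∧ ψ.isGround
  | ex _ _ => False
  | box φ => φ.isGround

def isAtomic : Formula S → Prop
  | atom _ _ => True
  | eq _ _ => True
  | not _ => False
  | and _ _ => False
  | ex _ _ => False
  | box _ => False

/-- The modal operator 𝖫 occurs only applied to (objective) atomic formulas. -/
def boxAtomic : Formula S → Prop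
  | atom _ _ => True
  | eq _ _ => True
  | not φ => φ.boxAtomic
  | and φ ψ => φ.boxAtomic ∧ ψ.boxAtomic
  | ex _ φ => φ.boxAtomic
  | box φ => φ.isAtomic

/-- Propositional formulas: built from 0-ary predicates only. -/
def isPropositional : Formula S → Prop
  | atom p _ => S.arP p = 0
  | eq _ _ => False
  | not φ => φ.isPropositional
  | and φ ψ => φ.isPropositional ∧ ψ.isPropositional
  | ex _ _ => False
  | box _ => False

def freeIn (x : ℕ) : Formula S → Prop
  | atom _ ts => ∃ i, (ts i).hasVar x
  | eq t₁ t₂ => t₁.hasVar x ∨ t₂.hasVar x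
  | not φ => φ.freeIn x
  | and φ ψ => φ.freeIn x ∨ ψ.freeIn x
  | ex y φ => x ≠ y ∧ φ.freeIn x
  | box φ => φ.freeIn x

/-- A formula is closed (a sentence) if it has no free variables. -/
def closed (φ : Formula S) : Prop := ∀ x, ¬ φ.freeIn x

/-- Capture-avoiding application of a partial name substitution (values are ground). -/
def subst (β : ℕ → Option (Term S)) : Formula S → Formula S
  | atom p ts => atom p (fun i => (ts i).subst β)
  | eq t₁ t₂ => eq (t₁.subst β) (t₂.subst β)
  | not φ => not (φ.subst β)
  | and φ ψ => and (φ.subst β) (ψ.subst β)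
  | ex y φ => ex y (φ.subst (fun z => if z = y then none else β z))
  | box φ => box (φ.subst β)

def funcs : Formula S → Set S.Func
  | atom _ ts => ⋃ i, (ts i).funcs
  | eq t₁ t₂ => t₁.funcs ∪ t₂.funcs
  | not φ => φ.funcs
  | and φ ψ => φ.funcs ∪ ψ.funcs
  | ex _ φ => φ.funcs
  | box φ => φ.funcs

def preds : Formula S → Set S.Pred
  | atom p _ => {p}
  | eq _ _ => ∅
  | not φ => φ.preds
  | and φ ψ => φ.preds ∪ ψ.preds
  | ex _ φ => φ.preds
  | box φ => φ.preds

/-- `φ ∨ ψ` as an abbreviation: `¬(¬φ ∧ ¬ψ)`. -/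
def or (φ ψ : Formula S) : Formula S := not (and (not φ) (not ψ))

/-- `φ ⊃ ψ` as an abbreviation: `¬(φ ∧ ¬ψ)`. -/
def imp (φ ψ : Formula S) : Formula S := not (and φ (not ψ))

/-- `∀x.φ` as an abbreviation: `¬∃x.¬φ`. -/
def all (x : ℕ) (φ : Formula S) : Formula S := not (ex x (not φ))

end Formula

/-! ## Semantics -/

structure Interp (S : Sig) where
  U : Type
  nonempty : Nonempty U
  interpF : (f : S.Func) → (Fin (S.arF f) → U) → U
  interpP : (p : S.Pred) → (Fin (S.arP p) → U) → Prop

noncomputable def Interp.dflt {S : Sig} (w : Interp S) : w.U := Classical.choice w.nonempty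

def Term.eval {S : Sig} (w : Interp S) (B : ℕ → w.U) : Term S → w.U
  | Term.var x => B x
  | Term.func f ts => w.interpF f (fun i => (ts i).eval w B)

/-- Evaluation of a ground term (the assignment is irrelevant). -/
noncomputable def Term.evalG {S : Sig} (w : Interp S) (t : Term S) : w.U :=
  t.eval w (fun _ => w.dflt)

/-- An individual is named if some name (ground term) denotes it. -/
def IsNamed {S : Sig} (w : Interp S) (k : w.U) : Prop :=
  ∃ t : Term S, t.isGround ∧ Term.evalG w t = k

/-- A name substitution `β` is associated with the variable assignment `B`:
its domain is exactly the set of variables whose `B`-value is named, and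
it assigns to each such variable a name denoting its `B`-value. -/
def Assoc {S : Sig} (w : Interp S) (B : ℕ → w.U) (β : ℕ → Option (Term S)) : Prop :=
  ∀ x : ℕ,
    (IsNamed w (B x) → (β x).isSome) ∧
    (∀ t : Term S, β x = some t → t.isGround ∧ Term.evalG w t = B x)

/-- The two semantics: any-name (E) and all-name (A). -/
inductive Sem : Type
  | any
  | all

/-- Satisfaction of a formula in an autoepistemic interpretation `⟨w,Γ⟩`
under a variable assignment, for the any-name (E) resp. all-name (A) semantics. -/
def Sat {S : Sig} (X : Sem) (w : Interp S) (Γ : Set (Formula S)) :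
    Formula S → (ℕ → w.U) → Prop
  | Formula.atom p ts, B => w.interpP p (fun i => (ts i).eval w B)
  | Formula.eq t₁ t₂, B => t₁.eval w B = t₂.eval w B
  | Formula.not φ, B => ¬ Sat X w Γ φ B
  | Formula.and φ ψ, B => Sat X w Γ φ B ∧ Sat X w Γ ψ B
  | Formula.ex x φ, B => ∃ u : w.U, Sat X w Γ φ (Function.update B x u)
  | Formula.box φ, B =>
      match X with
      | Sem.any => ∃ β, Assoc w B β ∧ (φ.subst β).closed ∧ φ.subst β ∈ Γ
      | Sem.all => ∀ β, Assoc w B β → (φ.subst β).closed ∧ φ.subst β ∈ Γ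

def ModelsF {S : Sig} (X : Sem) (w : Interp S) (Γ : Set (Formula S)) (φ : Formula S) : Prop :=
  ∀ B : ℕ → w.U, Sat X w Γ φ B

def ModelsT {S : Sig} (X : Sem) (w : Interp S) (Γ Φ : Set (Formula S)) : Prop :=
  ∀ φ ∈ Φ, ModelsF X w Γ φ

/-- `Φ ⊨ˣ_Γ φ`. -/
def Entails {S : Sig} (X : Sem) (Φ Γ : Set (Formula S)) (φ : Formula S) : Prop :=
  ∀ w : Interp S, ModelsT X w Γ Φ → ModelsF X w Γ φ

/-- The standard names assumption: all names are interpreted distinctly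
and every individual is named. -/
def SNA {S : Sig} (w : Interp S) : Prop :=
  (∀ t₁ t₂ : Term S, t₁.isGround → t₂.isGround → Term.evalG w t₁ = Term.evalG w t₂ → t₁ = t₂) ∧
  (∀ k : w.U, IsNamed w k)

/-- Entailment restricted to interpretations satisfying the standard names assumption. -/
def EntailsSN {S : Sig} (X : Sem) (Φ Γ : Set (Formula S)) (φ : Formula S) : Prop :=
  ∀ w : Interp S, SNA w → ModelsT X w Γ Φ → ModelsF X w Γ φ

/-- `T` is a stableˣ expansion of `Φ`. -/
def StableExp {S : Sig} (X : Sem) (Φ T : Set (Formula S)) : Prop :=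
  T = {φ | Entails X Φ T φ}

def objOf {S : Sig} (T : Set (Formula S)) : Set (Formula S) :=
  {φ ∈ T | φ.isObjective}

def ogOf {S : Sig} (T : Set (Formula S)) : Set (Formula S) :=
  {φ ∈ T | φ.isObjective ∧ φ.isGround}

def ogaOf {S : Sig} (T : Set (Formula S)) : Set (Formula S) :=
  {φ ∈ T | φ.isObjective ∧ φ.isGround ∧ φ.isAtomic}

def Consistent {S : Sig} (T : Set (Formula S)) : Prop := T ≠ Set.univ

/-- `Φ₁ ≡ˣ Φ₂`: same stableˣ expansions. -/
def ExpEquiv {S : Sig} (X : Sem) (Φ₁ Φ₂ : Set (Formula S)) : Prop :=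
  ∀ T, StableExp X Φ₁ T ↔ StableExp X Φ₂ T

/-- `Φ₁ ≡ˣ_γ Φ₂` for a selector `sel` (e.g. `ogaOf`): the stableˣ expansions
correspond with respect to `sel`. -/
def ExpEquivSel {S : Sig} (X : Sem) (sel : Set (Formula S) → Set (Formula S))
    (Φ₁ Φ₂ : Set (Formula S)) : Prop :=
  (∀ T, StableExp X Φ₁ T → ∃ T', StableExp X Φ₂ T' ∧ sel T = sel T') ∧
  (∀ T', StableExp X Φ₂ T' → ∃ T, StableExp X Φ₁ T ∧ sel T = sel T')

/-- Autoepistemicˣ consequences of `Φ`. -/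
def Cn {S : Sig} (X : Sem) (Φ : Set (Formula S)) : Set (Formula S) :=
  {φ | ∀ T, StableExp X Φ T → φ ∈ T}

def CnO {S : Sig} (X : Sem) (Φ : Set (Formula S)) : Set (Formula S) :=
  {φ ∈ Cn X Φ | φ.isObjective}

def CnOg {S : Sig} (X : Sem) (Φ : Set (Formula S)) : Set (Formula S) :=
  {φ ∈ Cn X Φ | φ.isObjective ∧ φ.isGround}

/-! ## Logic programs -/

structure PAtom (S : Sig) where
  p : S.Pred
  args : Fin (S.arP p) → Term S

namespace PAtom

variable {S : Sig}

def toFormula (a : PAtom S) : Formula S := Formula.atom a.p a.args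

def isGround (a : PAtom S) : Prop := ∀ i, (a.args i).isGround

def hasVar (x : ℕ) (a : PAtom S) : Prop := ∃ i, (a.args i).hasVar x

def substA (σ : ℕ → Term S) (a : PAtom S) : PAtom S :=
  ⟨a.p, fun i => (a.args i).subst (fun x => some (σ x))⟩

def funcs (a : PAtom S) : Set S.Func := ⋃ i, (a.args i).funcs

end PAtom

/-- A (disjunctive) rule `h₁ | … | h_l ← b₁,…,b_m, not c₁,…,not c_n`,
together with a list of the variables occurring in it. -/
structure Rule (S : Sig) where
  head : List (PAtom S)
  pos : List (PAtom S)
  neg : List (PAtom S)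
  vars : List ℕ

namespace Rule

variable {S : Sig}

def atoms (r : Rule S) : List (PAtom S) := r.head ++ r.pos ++ r.neg

def hasVar (x : ℕ) (r : Rule S) : Prop := ∃ a ∈ r.atoms, PAtom.hasVar x a

/-- Well-formedness: at least one head atom, and `vars` lists all variables of the rule. -/
def wf (r : Rule S) : Prop := r.head ≠ [] ∧ ∀ x, r.hasVar x → x ∈ r.vars

def isNormal (r : Rule S) : Prop := r.head.length = 1

def isGround (r : Rule S) : Prop := (∀ a ∈ r.atoms, a.isGround) ∧ r.vars = []

def isSafe (r : Rule S) : Prop := ∀ x, r.hasVar x → ∃ a ∈ r.pos, PAtom.hasVar x a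

def isPositive (r : Rule S) : Prop := r.neg = []

def applySubst (σ : ℕ → Term S) (r : Rule S) : Rule S :=
  ⟨r.head.map (PAtom.substA σ), r.pos.map (PAtom.substA σ), r.neg.map (PAtom.substA σ), []⟩

end Rule

abbrev Program (S : Sig) := Set (Rule S)

def progWf {S : Sig} (P : Program S) : Prop := ∀ r ∈ P, r.wf
def progNormal {S : Sig} (P : Program S) : Prop := ∀ r ∈ P, r.isNormal
def progGround {S : Sig} (P : Program S) : Prop := ∀ r ∈ P, r.isGround
def progSafe {S : Sig} (P : Program S) : Prop := ∀ r ∈ P, r.isSafe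
def progPositive {S : Sig} (P : Program S) : Prop := ∀ r ∈ P, r.isPositive

/-- The function symbols occurring in `P` (part of the signature `Σ_P`). -/
def progFuncs {S : Sig} (P : Program S) : Set S.Func :=
  {f | ∃ r ∈ P, ∃ a ∈ r.atoms, f ∈ a.funcs}

/-- The predicate symbols occurring in `P` (part of the signature `Σ_P`). -/
def progPreds {S : Sig} (P : Program S) : Set S.Pred :=
  {q | ∃ r ∈ P, ∃ a ∈ r.atoms, a.p = q}

/-- The ambient signature is exactly the signature `Σ_P` of `P`. -/
def fullSig {S : Sig} (P : Program S) : Prop :=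
  (∀ f : S.Func, f ∈ progFuncs P) ∧ (∀ q : S.Pred, q ∈ progPreds P)

/-- Standing assumption: `Σ_P` contains a 0-ary function symbol whenever it
has a predicate symbol of arity greater than 0. -/
def goodSig {S : Sig} (P : Program S) : Prop :=
  (∃ q ∈ progPreds P, 0 < S.arP q) → ∃ f ∈ progFuncs P, S.arF f = 0

/-! ## Embeddings of logic programs into FO-AEL -/

def andAll {S : Sig} : Formula S → List (Formula S) → Formula S
  | φ, [] => φ
  | φ, ψ :: rest => andAll (Formula.and φ ψ) rest

def orAll {S : Sig} : Formula S → List (Formula S) → Formula S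
  | φ, [] => φ
  | φ, ψ :: rest => orAll (Formula.or φ ψ) rest

/-- `impOf ants c` is `⋀ ants ⊃ c` (just `c` if there are no antecedents). -/
def impOf {S : Sig} : List (Formula S) → Formula S → Formula S
  | [], c => c
  | a :: rest, c => Formula.imp (andAll a rest) c

/-- Disjunction of a nonempty list (junk value on the empty list,
which is excluded by rule well-formedness). -/
def disjOf {S : Sig} : List (Formula S) → Formula S
  | [] => Formula.eq (Term.var 0) (Term.var 0)
  | h :: rest => orAll h rest

/-- Universal uclosure over the listed variables. -/
def uclosure {S : Sig} (vs : List ℕ) (φ : Formula S) : Formula S :=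
  vs.foldr Formula.all φ

def bodyHP {S : Sig} (r : Rule S) : List (Formula S) :=
  r.pos.map PAtom.toFormula ++ r.neg.map (fun c => Formula.not (Formula.box c.toFormula))

def bodyE {S : Sig} (r : Rule S) : List (Formula S) :=
  r.pos.map (fun b => Formula.and b.toFormula (Formula.box b.toFormula)) ++
    r.neg.map (fun c => Formula.not (Formula.box c.toFormula))

/-- `τ_HP(r)` resp. `τ^∨_HP(r)`. -/
def embHP {S : Sig} (r : Rule S) : Formula S :=
  uclosure r.vars (impOf (bodyHP r) (disjOf (r.head.map PAtom.toFormula)))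

/-- `τ_EB(r)` resp. `τ^∨_EB(r)`. -/
def embEB {S : Sig} (r : Rule S) : Formula S :=
  uclosure r.vars (impOf (bodyE r) (disjOf (r.head.map PAtom.toFormula)))

/-- `τ_EH(r)` resp. `τ^∨_EH(r)`. -/
def embEH {S : Sig} (r : Rule S) : Formula S :=
  uclosure r.vars (impOf (bodyE r)
    (disjOf (r.head.map (fun h => Formula.and h.toFormula (Formula.box h.toFormula)))))

/-- The unique-names axioms `¬𝖫(t₁=t₂) ⊃ t₁≠t₂` for distinct names of `Σ_P`. -/
def UNAax {S : Sig} (P : Program S) : Set (Formula S) :=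
  {φ | ∃ t₁ t₂ : Term S, t₁.isNameOf (progFuncs P) ∧ t₂.isNameOf (progFuncs P) ∧ t₁ ≠ t₂ ∧
        φ = Formula.imp (Formula.not (Formula.box (Formula.eq t₁ t₂)))
              (Formula.not (Formula.eq t₁ t₂))}

/-- The positive introspection axioms `α ⊃ 𝖫α` for objective ground atoms of `Σ_P`. -/
def PIAax {S : Sig} (P : Program S) : Set (Formula S) :=
  {φ | ∃ a : PAtom S, a.p ∈ progPreds P ∧ (∀ i, (a.args i).isNameOf (progFuncs P)) ∧
        φ = Formula.imp a.toFormula (Formula.box a.toFormula)}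

def ruleEmb {S : Sig} (emb : Rule S → Formula S) (P : Program S) : Set (Formula S) :=
  {φ | ∃ r ∈ P, φ = emb r}

def tauHP {S : Sig} (P : Program S) : Set (Formula S) := ruleEmb embHP P ∪ UNAax P
def tauEB {S : Sig} (P : Program S) : Set (Formula S) := ruleEmb embEB P ∪ UNAax P
def tauEH {S : Sig} (P : Program S) : Set (Formula S) := ruleEmb embEH P ∪ UNAax P
def tauHPv {S : Sig} (P : Program S) : Set (Formula S) := ruleEmb embHP P ∪ PIAax P ∪ UNAax P
def tauEBv {S : Sig} (P : Program S) : Set (Formula S) := ruleEmb embEB P ∪ PIAax P ∪ UNAax P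
def tauEHv {S : Sig} (P : Program S) : Set (Formula S) := ruleEmb embEH P ∪ UNAax P
def tauHPminus {S : Sig} (P : Program S) : Set (Formula S) := ruleEmb embHP P
def tauEHvminus {S : Sig} (P : Program S) : Set (Formula S) := ruleEmb embEH P

/-! ## Grounding and stable models -/

/-- The grounding of `P`: all ground instantiations of rules of `P`
obtained by replacing variables with names of `Σ_P`. -/
def grP {S : Sig} (P : Program S) : Program S :=
  {r' | ∃ r ∈ P, ∃ σ : ℕ → Term S,
        (∀ x, r.hasVar x → (σ x).isNameOf (progFuncs P)) ∧ r' = Rule.applySubst σ r}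

/-- A Herbrand interpretation: a set of ground atomic formulas. -/
def HerbrandI {S : Sig} (M : Set (Formula S)) : Prop :=
  ∀ φ ∈ M, φ.isAtomic ∧ φ.isGround

/-- `M` is a Herbrand model of the positive ground program `Q` (relative to the
names of `Σ_P`): rules are satisfied and `t = t ∈ M` for every name `t`. -/
def HerbrandModelOf {S : Sig} (P Q : Program S) (M : Set (Formula S)) : Prop :=
  HerbrandI M ∧
  (∀ r ∈ Q, (∀ b ∈ r.pos, PAtom.toFormula b ∈ M) → ∃ h ∈ r.head, PAtom.toFormula h ∈ M) ∧
  (∀ t : Term S, t.isNameOf (progFuncs P) → Formula.eq t t ∈ M)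

/-- The Gelfond–Lifschitz reduct of `gr(P)` with respect to `M`. -/
def reduct {S : Sig} (P : Program S) (M : Set (Formula S)) : Program S :=
  {r' | ∃ r ∈ grP P, (∀ c ∈ r.neg, PAtom.toFormula c ∉ M) ∧
        r' = ⟨r.head, r.pos, [], r.vars⟩}

/-- `M` is a stable model of `P`: a minimal Herbrand model of the reduct of `gr(P)` w.r.t. `M`. -/
def isStableModel {S : Sig} (P : Program S) (M : Set (Formula S)) : Prop :=
  HerbrandModelOf P (reduct P M) M ∧
  ∀ M', M' ⊆ M → HerbrandModelOf P (reduct P M) M' → M' = M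

/-! ## First-order theories and classes thereof -/

/-- An FO theory: a set of objective sentences. -/
def FOTheory {S : Sig} (Φ : Set (Formula S)) : Prop :=
  ∀ φ ∈ Φ, φ.isObjective ∧ φ.closed

def theoryFuncs {S : Sig} (Φ : Set (Formula S)) : Set S.Func := {f | ∃ φ ∈ Φ, f ∈ φ.funcs}
def theoryPreds {S : Sig} (Φ : Set (Formula S)) : Set S.Pred := {q | ∃ φ ∈ Φ, q ∈ φ.preds}

/-- The ambient signature is exactly the union of the signatures of `Φ` and `P`. -/
def CoverSig {S : Sig} (Φ : Set (Formula S)) (P : Program S) : Prop :=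
  (∀ f : S.Func, f ∈ theoryFuncs Φ ∪ progFuncs P) ∧
  (∀ q : S.Pred, q ∈ theoryPreds Φ ∪ progPreds P)

def exClosure {S : Sig} (ys : List ℕ) (φ : Formula S) : Formula S := ys.foldr Formula.ex φ

/-- A Horn sentence `(∀)(b₁ ∧ … ∧ b_n ⊃ h)` with atomic `b_i`, `h`
(the consequent `h` may be absent). -/
def isHornSentence {S : Sig} (φ : Formula S) : Prop :=
  ∃ (vs : List ℕ) (bs : List (Formula S)),
    (∀ b ∈ bs, b.isAtomic) ∧
    ((∃ h : Formula S, h.isAtomic ∧ φ = uclosure vs (impOf bs h)) ∨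
     (∃ b rest, bs = b :: rest ∧ φ = uclosure vs (Formula.not (andAll b rest))))

def HornTheory {S : Sig} (Φ : Set (Formula S)) : Prop :=
  FOTheory Φ ∧ ∀ φ ∈ Φ, isHornSentence φ

/-- A generalized Horn sentence `(∀)(b₁ ∧ … ∧ b_n ⊃ ∃ȳ.h)` with atomic `b_i`, `h`,
the variables `ȳ` occurring only in `h` (the consequent may be absent). -/
def isGHornSentence {S : Sig} (φ : Formula S) : Prop :=
  ∃ (vs : List ℕ) (bs : List (Formula S)),
    (∀ b ∈ bs, b.isAtomic) ∧
    ((∃ (ys : List ℕ) (h : Formula S), h.isAtomic ∧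
        (∀ y ∈ ys, ∀ b ∈ bs, ¬ b.freeIn y) ∧
        φ = uclosure vs (impOf bs (exClosure ys h))) ∨
     (∃ b rest, bs = b :: rest ∧ φ = uclosure vs (Formula.not (andAll b rest))))

def GHornTheory {S : Sig} (Φ : Set (Formula S)) : Prop :=
  FOTheory Φ ∧ ∀ φ ∈ Φ, isGHornSentence φ

def PropTheory {S : Sig} (Φ : Set (Formula S)) : Prop :=
  FOTheory Φ ∧ ∀ φ ∈ Φ, φ.isPropositional

/-! In the presence of the positive introspection axioms, a ground atom `b` of `P` implies `𝖫b`, so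
`b` and `b ∧ 𝖫b` hold in the same autoepistemic interpretations. The two theories therefore have the
same autoepistemic models relative to *every* belief set, hence the same stable expansions. -/

theorem Term.isNameOf_of_isGround {S : Sig} {F : Set S.Func} {t : Term S}
    (ht : t.isGround) (hF : t.funcs ⊆ F) : t.isNameOf F := by
  induction t with
  | var x => exact ht
  | func f ts ih =>
    obtain ⟨hf, hts⟩ := Set.insert_subset_iff.1 hF
    exact ⟨hf, fun i => ih i (ht i) (Set.iUnion_subset_iff.1 hts i)⟩

theorem Rule.mem_atoms_of_mem_pos {S : Sig} {r : Rule S} {b : PAtom S} (hb : b ∈ r.pos) :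
    b ∈ r.atoms :=
  List.mem_append_left _ (List.mem_append_right _ hb)

theorem imp_box_mem_PIAax {S : Sig} {P : Program S} {r : Rule S} {a : PAtom S}
    (hr : r ∈ P) (ha : a ∈ r.atoms) (hground : a.isGround) :
    a.toFormula.imp a.toFormula.box ∈ PIAax P := by
  refine ⟨a, ⟨r, hr, a, ha, rfl⟩, fun i => ?_, rfl⟩
  have hfuncs : (a.args i).funcs ⊆ progFuncs P :=
    fun f hf => ⟨r, hr, a, ha, Set.mem_iUnion_of_mem i hf⟩
  exact Term.isNameOf_of_isGround (hground i) hfuncs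

section Semantics

variable {S : Sig} {X : Sem} {w : Interp S} {Γ : Set (Formula S)} {B : ℕ → w.U}

theorem sat_imp {φ ψ : Formula S} :
    Sat X w Γ (φ.imp ψ) B ↔ (Sat X w Γ φ B → Sat X w Γ ψ B) := by
  simp only [Formula.imp, Sat, not_and, not_not]

theorem sat_all {x : ℕ} {φ : Formula S} :
    Sat X w Γ (φ.all x) B ↔ ∀ u, Sat X w Γ φ (Function.update B x u) := by
  simp only [Formula.all, Sat, not_exists, not_not]

theorem sat_andAll {φ : Formula S} {l : List (Formula S)} :
    Sat X w Γ (andAll φ l) B ↔ ∀ a ∈ φ :: l, Sat X w Γ a B := by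
  induction l generalizing φ with
  | nil => simp only [andAll, List.forall_mem_singleton]
  | cons ψ l ih => simp only [andAll, ih, List.forall_mem_cons, Sat, and_assoc]

theorem sat_impOf {l : List (Formula S)} {φ : Formula S} :
    Sat X w Γ (impOf l φ) B ↔ ((∀ a ∈ l, Sat X w Γ a B) → Sat X w Γ φ B) := by
  cases l with
  | nil => simp [impOf]
  | cons a l => simp only [impOf, sat_imp, sat_andAll]

theorem modelsF_all {x : ℕ} {φ : Formula S} :
    ModelsF X w Γ (φ.all x) ↔ ModelsF X w Γ φ := by
  refine ⟨fun h B => ?_, fun h B => sat_all.2 fun u => h (Function.update B x u)⟩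
  simpa only [Function.update_eq_self] using sat_all.1 (h B) (B x)

theorem modelsF_uclosure {vs : List ℕ} {φ : Formula S} :
    ModelsF X w Γ (uclosure vs φ) ↔ ModelsF X w Γ φ := by
  induction vs with
  | nil => rfl
  | cons x vs ih => exact modelsF_all.trans ih

theorem modelsT_union {Φ Ψ : Set (Formula S)} :
    ModelsT X w Γ (Φ ∪ Ψ) ↔ ModelsT X w Γ Φ ∧ ModelsT X w Γ Ψ :=
  forall₂_or_left

theorem modelsT_ruleEmb {emb : Rule S → Formula S} {P : Program S} :
    ModelsT X w Γ (ruleEmb emb P) ↔ ∀ r ∈ P, ModelsF X w Γ (emb r) :=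
  ⟨fun h r hr => h (emb r) ⟨r, hr, rfl⟩, fun h _ ⟨r, hr, hφ⟩ => hφ ▸ h r hr⟩

theorem expEquiv_of_modelsT_iff {Φ₁ Φ₂ : Set (Formula S)}
    (h : ∀ (w : Interp S) (Γ : Set (Formula S)), ModelsT X w Γ Φ₁ ↔ ModelsT X w Γ Φ₂) :
    ExpEquiv X Φ₁ Φ₂ := by
  intro T
  simp only [StableExp, Entails, h]

end Semantics

section Embeddings

variable {S : Sig} {X : Sem} {w : Interp S} {Γ : Set (Formula S)}

theorem forall_sat_bodyHP_iff_bodyE {r : Rule S} {B : ℕ → w.U}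
    (hbox : ∀ b ∈ r.pos, Sat X w Γ b.toFormula B → Sat X w Γ b.toFormula.box B) :
    (∀ a ∈ bodyHP r, Sat X w Γ a B) ↔ ∀ a ∈ bodyE r, Sat X w Γ a B := by
  have hpos : (∀ b ∈ r.pos, Sat X w Γ b.toFormula B) ↔
      ∀ b ∈ r.pos, Sat X w Γ (b.toFormula.and b.toFormula.box) B :=
    forall₂_congr fun b hb => (and_iff_left_of_imp (hbox b hb)).symm
  simp only [bodyHP, bodyE, List.forall_mem_append, List.forall_mem_map, hpos]

theorem modelsF_embHP_iff_embEB {P : Program S} {r : Rule S} (hr : r ∈ P)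
    (hground : ∀ b ∈ r.pos, b.isGround) (hPIA : ModelsT X w Γ (PIAax P)) :
    ModelsF X w Γ (embHP r) ↔ ModelsF X w Γ (embEB r) := by
  rw [embHP, embEB, modelsF_uclosure, modelsF_uclosure]
  refine forall_congr' fun B => ?_
  have hbox : ∀ b ∈ r.pos, Sat X w Γ b.toFormula B → Sat X w Γ b.toFormula.box B := by
    intro b hb
    have hmem := imp_box_mem_PIAax hr (Rule.mem_atoms_of_mem_pos hb) (hground b hb)
    exact sat_imp.1 (hPIA _ hmem B)
  rw [sat_impOf, sat_impOf, forall_sat_bodyHP_iff_bodyE hbox]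

theorem modelsT_tauHPv_iff_tauEBv {P : Program S}
    (hground : ∀ r ∈ P, ∀ b ∈ r.pos, b.isGround) :
    ModelsT X w Γ (tauHPv P) ↔ ModelsT X w Γ (tauEBv P) := by
  simp only [tauHPv, tauEBv, modelsT_union, modelsT_ruleEmb]
  refine and_congr_left fun _ => and_congr_left fun hPIA => ?_
  exact forall₂_congr fun r hr => modelsF_embHP_iff_embEB hr (hground r hr) hPIA

end Embeddings

theorem stmt16_general {S : Sig} (X : Sem) (Φ : Set (Formula S)) (P : Program S)
    (hground : ∀ r ∈ P, ∀ b ∈ r.pos, b.isGround) :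
    ExpEquiv X (Φ ∪ tauHPv P) (Φ ∪ tauEBv P) :=
  expEquiv_of_modelsT_iff fun _ _ => by
    rw [modelsT_union, modelsT_union, modelsT_tauHPv_iff_tauEBv hground]

/-- For every FO theory `Φ` and ground disjunctive program `P`,
`Φ ∪ τ^∨_HP(P)` and `Φ ∪ τ^∨_EB(P)` have exactly the same stableᴱ expansions. -/
theorem stmt16 {S : Sig} (Φ : Set (Formula S)) (P : Program S)
    (hΦ : FOTheory Φ) (hwf : progWf P) (hground : progGround P)
    (hgood : goodSig P) (hcov : CoverSig Φ P) :
    ExpEquiv Sem.any (Φ ∪ tauHPv P) (Φ ∪ tauEBv P) :=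
  stmt16_general Sem.any Φ P fun r hr b hb =>
    (hground r hr).1 b (Rule.mem_atoms_of_mem_pos hb)
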